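/- arXiv:1406.5261 — 2 statements merged into one kernel-verified Lean document; each statement's English description precedes it below -/
import Mathlib

section
/- Let ⋯ → Q_i → Q_{i-1} → ⋯ → Q₀ → V → 0 be an exact complex of R-modules in which Q_i is of type FP_{m-i} for all 0 ≤ i ≤ m. Then V is of type FP_m. -/
/-!
The argument replaces `ModuleCat.IsFP` by the recursive notion `FPn`: finitely generated in
degree `0`, and in degree `n + 1` a quotient of a finitely generated projective module by a
kernel which is `FPn n`. Two closure properties of `FPn` carry the proof.

* Extensions (`FPn.of_exact`): if the outer terms of a short exact sequence are `FPn n`, so is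
  the middle one, by the horseshoe lemma.
* Quotients (`FPn.of_surjective`): if `g : B → C` is onto, `B` is `FPn (n + 1)` and `ker g` is
  `FPn n`, then `C` is `FPn (n + 1)`. If `p : P → B` is onto with `P` finitely generated
  projective and `ker p` of type `FPn n`, then `ker (g ∘ p)` is an extension of `ker g` by
  `ker p`.

Induction on `m` then gives the theorem for `FPn` (`FPn.of_complex`): `ker ε` is resolved by
the shifted complex, hence is `FPn (m - 1)` if `m > 0`, and the quotient property applies to `ε`.

That `IsFP` implies `FPn` is itself a case of `FPn.of_complex`, applied to the projective
resolution, since finitely generated projective modules are `FPn n` for every `n`. Conversely,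
a module that is `FPn n` gets a projective resolution by splicing a resolution of the kernel
onto the projective module chosen at each stage.
-/

open CategoryTheory

/-- A module `M` over the associative unital ring `R` is of type `FP m` (for `m : ℤ`) if it
admits a projective resolution whose projective modules in degrees `≤ m` are finitely
generated.  (For `m < 0` the condition is vacuous.) -/
def ModuleCat.IsFP (R : Type) [Ring R] (m : ℤ) (M : ModuleCat R) : Prop :=
  ∃ P : ProjectiveResolution M, ∀ i : ℕ, (i : ℤ) ≤ m → Module.Finite R (P.complex.X i)

/-- Recursive form of type `FP n`. An `FPn 0` module is a finitely generated one; an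
`FPn (n + 1)` module is a quotient of a finitely generated projective module with kernel
`FPn n`. -/
def FPn (R : Type) [Ring R] : ℕ → ∀ (M : Type) [AddCommGroup M] [Module R M], Prop
  | 0, M, _, _ => Module.Finite R M
  | n + 1, M, _, _ => ∃ (P : Type) (_ : AddCommGroup P) (_ : Module R P) (f : P →ₗ[R] M),
      Module.Finite R P ∧ Module.Projective R P ∧ Function.Surjective f ∧
        FPn R n (LinearMap.ker f)

section FPn

variable {R : Type} [Ring R]

/-- Horseshoe lemma for `FPn`. -/
theorem FPn.of_exact (n : ℕ) : ∀ {A B C : Type} [AddCommGroup A] [Module R A]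
    [AddCommGroup B] [Module R B] [AddCommGroup C] [Module R C]
    (f : A →ₗ[R] B) (g : B →ₗ[R] C), Function.Injective f → Function.Exact f g →
    Function.Surjective g → FPn R n A → FPn R n C → FPn R n B := by
  induction n with
  | zero =>
    intro A B C _ _ _ _ _ _ f g _ hfg hg hA hC
    have : Module.Finite R A := hA
    have : Module.Finite R C := hC
    exact Module.Finite.of_exact hfg hg
  | succ n ih =>
    intro A B C _ _ _ _ _ _ f g hf hfg hg hA hC
    obtain ⟨P, _, _, p, _, _, hp, hkp⟩ := hA
    obtain ⟨Q, _, _, q, _, _, hq, hkq⟩ := hC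
    obtain ⟨h, hh⟩ := Module.projective_lifting_property g q hg
    have hh' : ∀ y, g (h y) = q y := fun y => LinearMap.congr_fun hh y
    have hgf : ∀ a, g (f a) = 0 := fun a => (hfg (f a)).2 ⟨a, rfl⟩
    refine ⟨P × Q, inferInstance, inferInstance, (f ∘ₗ p).coprod h, inferInstance,
      inferInstance, ?_, ?_⟩
    · intro b
      obtain ⟨y, hy⟩ := hq (g b)
      obtain ⟨a, ha⟩ := (hfg (b - h y)).1 (by rw [map_sub, hh', hy, sub_self])
      obtain ⟨x, rfl⟩ := hp a
      exact ⟨(x, y), by simp [ha]⟩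
    · refine ih
        (((LinearMap.inl R P Q) ∘ₗ (LinearMap.ker p).subtype).codRestrict
          (LinearMap.ker ((f ∘ₗ p).coprod h)) ?_)
        (((LinearMap.snd R P Q) ∘ₗ (LinearMap.ker ((f ∘ₗ p).coprod h)).subtype).codRestrict
          (LinearMap.ker q) ?_) ?_ ?_ ?_ hkp hkq
      · rintro ⟨x, hx⟩
        have hx' : p x = 0 := hx
        simp [hx']
      · rintro ⟨⟨x, y⟩, hxy⟩
        have h1 : f (p x) + h y = 0 := by simpa using hxy
        have h2 := congrArg g h1
        rw [map_add, hgf, hh', zero_add, map_zero] at h2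
        exact h2
      · rintro ⟨x, hx⟩ ⟨x', hx'⟩ hxx
        have h1 := congrArg (fun z => z.1.1) hxx
        exact Subtype.ext h1
      · rintro ⟨⟨x, y⟩, hxy⟩
        have h1 : f (p x) + h y = 0 := by simpa using hxy
        constructor
        · intro h0
          have hy : y = 0 := congrArg Subtype.val h0
          subst hy
          have hx : p x = 0 := hf (by simpa using h1)
          exact ⟨⟨x, hx⟩, rfl⟩
        · rintro ⟨⟨x', hx'⟩, h0⟩
          have h2 := congrArg (fun z => z.1.2) h0
          exact Subtype.ext h2.symm
      · rintro ⟨y, hy⟩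
        have hy' : q y = 0 := hy
        obtain ⟨a, ha⟩ := (hfg (h y)).1 (by rw [hh', hy'])
        obtain ⟨x, rfl⟩ := hp a
        exact ⟨⟨(-x, y), by simp [ha]⟩, rfl⟩

theorem FPn.of_surjective (n : ℕ) {B C : Type} [AddCommGroup B] [Module R B]
    [AddCommGroup C] [Module R C] (g : B →ₗ[R] C) (hg : Function.Surjective g)
    (hB : FPn R (n + 1) B) (hK : FPn R n (LinearMap.ker g)) : FPn R (n + 1) C := by
  obtain ⟨P, _, _, p, hfin, hproj, hp, hkp⟩ := hB
  refine ⟨P, inferInstance, inferInstance, g ∘ₗ p, hfin, hproj, hg.comp hp, ?_⟩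
  refine FPn.of_exact n
    (Submodule.inclusion (LinearMap.ker_le_ker_comp p g))
    ((p ∘ₗ (LinearMap.ker (g ∘ₗ p)).subtype).codRestrict (LinearMap.ker g) fun x => x.2)
    (Submodule.inclusion_injective _) ?_ ?_ hkp hK
  · rintro ⟨x, hx⟩
    constructor
    · intro h0
      exact ⟨⟨x, congrArg Subtype.val h0⟩, rfl⟩
    · rintro ⟨⟨y, hy⟩, h0⟩
      have h1 : y = x := congrArg Subtype.val h0
      subst h1
      exact Subtype.ext hy
  · rintro ⟨b, hb⟩
    obtain ⟨x, rfl⟩ := hp b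
    exact ⟨⟨x, hb⟩, rfl⟩

theorem FPn.of_projective (n : ℕ) : ∀ (M : Type) [AddCommGroup M] [Module R M],
    Module.Finite R M → Module.Projective R M → FPn R n M := by
  induction n with
  | zero => intro M _ _ h _; exact h
  | succ n ih =>
    intro M _ _ h h'
    have : Subsingleton (LinearMap.ker (LinearMap.id : M →ₗ[R] M)) := by
      rw [LinearMap.ker_id]; infer_instance
    exact ⟨M, inferInstance, inferInstance, LinearMap.id, h, h', Function.surjective_id,
      ih _ inferInstance inferInstance⟩

/-- The theorem for `FPn` in place of `ModuleCat.IsFP`. -/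
theorem FPn.of_complex (m : ℕ) :
    ∀ (Q : ℕ → Type) [∀ i, AddCommGroup (Q i)] [∀ i, Module R (Q i)]
    (V : Type) [AddCommGroup V] [Module R V]
    (d : ∀ i : ℕ, Q (i + 1) →ₗ[R] Q i) (ε : Q 0 →ₗ[R] V),
    Function.Surjective ε → Function.Exact (d 0) ε →
    (∀ i : ℕ, Function.Exact (d (i + 1)) (d i)) →
    (∀ i : ℕ, i ≤ m → FPn R (m - i) (Q i)) → FPn R m V := by
  induction m with
  | zero =>
    intro Q _ _ V _ _ d ε hs _ _ hQ
    have : Module.Finite R (Q 0) := hQ 0 le_rfl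
    exact Module.Finite.of_surjective ε hs
  | succ m ih =>
    intro Q _ _ V _ _ d ε hs h0 hex hQ
    refine FPn.of_surjective m ε hs (hQ 0 (Nat.zero_le _)) ?_
    refine ih (fun i => Q (i + 1)) (LinearMap.ker ε) (fun i => d (i + 1))
      ((d 0).codRestrict (LinearMap.ker ε) fun x => (h0 _).2 ⟨x, rfl⟩) ?_ ?_
      (fun i => hex (i + 1)) ?_
    · rintro ⟨y, hy⟩
      obtain ⟨x, hx⟩ := (h0 y).1 hy
      exact ⟨x, Subtype.ext hx⟩
    · intro x
      rw [← hex 0 x]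
      exact Subtype.ext_iff
    · intro i hi
      have := hQ (i + 1) (by omega)
      rwa [Nat.add_sub_add_right] at this

theorem FPn.of_isFP (m : ℕ) (M : Type) [AddCommGroup M] [Module R M]
    (h : ModuleCat.IsFP R m (ModuleCat.of R M)) : FPn R m M := by
  obtain ⟨P, hP⟩ := h
  -- The target of `P.π.f 0` is definitionally `M`.
  let ε : P.complex.X 0 ⟶ ModuleCat.of R M := P.π.f 0
  have hε : Epi ε := inferInstanceAs (Epi (P.π.f 0))
  have hw : P.complex.d 1 0 ≫ ε = 0 := P.complex_d_comp_π_f_zero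
  have hex : (ShortComplex.mk _ _ hw).Exact :=
    ShortComplex.exact_of_g_is_cokernel _ P.isColimitCokernelCofork
  refine FPn.of_complex m (fun i => P.complex.X i) M (fun i => (P.complex.d (i + 1) i).hom)
    ε.hom ((ModuleCat.epi_iff_surjective _).1 hε)
    ((ShortComplex.ShortExact.moduleCat_exact_iff_function_exact _).1 hex)
    (fun i => (ShortComplex.ShortExact.moduleCat_exact_iff_function_exact _).1
      (P.exact_succ i)) ?_
  intro i hi
  exact FPn.of_projective _ _ (hP i (by exact_mod_cast hi))
    ((IsProjective.iff_projective (P.complex.X i)).2 (P.projective i))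

/-- A degreewise projective complex `C`, exact in positive degrees and with `M` as cokernel of
`C.d 1 0`, is the complex of a projective resolution of `M`. -/
theorem exists_projectiveResolution (M : ModuleCat R) (C : ChainComplex (ModuleCat R) ℕ)
    (hC : ∀ n, Projective (C.X n)) (hex : ∀ n, C.ExactAt (n + 1)) (φ : C.X 0 ⟶ M)
    (w : C.d 1 0 ≫ φ = 0) (h0 : (ShortComplex.mk _ _ w).Exact) (hφ : Epi φ) :
    ∃ P : ProjectiveResolution M, P.complex = C := by
  refine ⟨{ complex := C
            projective := hC
            π := (ChainComplex.toSingle₀Equiv _ _).symm ⟨φ, w⟩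
            quasiIso := ⟨fun n => ?_⟩ }, rfl⟩
  cases n with
  | zero =>
    rw [ChainComplex.quasiIsoAt₀_iff, ShortComplex.quasiIso_iff_of_zeros' _ (C.shape _ _ (by simp)) rfl rfl]
    have hφ' : φ = ((ChainComplex.toSingle₀Equiv C M).symm ⟨φ, w⟩).f 0 := by simp
    refine (ShortComplex.exact_and_epi_g_iff_of_iso ?_).2 ⟨h0, hφ⟩
    exact ShortComplex.isoMk (Iso.refl _) (Iso.refl _) (Iso.refl _)
      ((Category.id_comp _).trans (Category.comp_id _).symm)
      ((Category.id_comp _).trans (hφ'.trans (Category.comp_id _).symm))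
  | succ n =>
    rw [quasiIsoAt_iff_exactAt']
    · exact hex n
    · apply ChainComplex.exactAt_succ_single_obj

/-- A resolution of the kernel of a surjection `f : P → M` from a projective module, extended by
`P` in degree `0`, is a resolution of `M`. -/
theorem exists_splice {P M : Type} [AddCommGroup P] [Module R P] [AddCommGroup M] [Module R M]
    (f : P →ₗ[R] M) (hP : Module.Projective R P) (hf : Function.Surjective f)
    (S : ProjectiveResolution (ModuleCat.of R (LinearMap.ker f))) :
    ∃ T : ProjectiveResolution (ModuleCat.of R M), T.complex.X 0 = ModuleCat.of R P ∧
      ∀ n, T.complex.X (n + 1) = S.complex.X n := by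
  let ε : S.complex.X 0 ⟶ ModuleCat.of R (LinearMap.ker f) := S.π.f 0
  have hε : Epi ε := inferInstanceAs (Epi (S.π.f 0))
  have hεs : Function.Surjective ε.hom := (ModuleCat.epi_iff_surjective _).1 hε
  have hw : S.complex.d 1 0 ≫ ε = 0 := S.complex_d_comp_π_f_zero
  have hex : (ShortComplex.mk _ _ hw).Exact :=
    ShortComplex.exact_of_g_is_cokernel _ S.isColimitCokernelCofork
  have hex' := (ShortComplex.ShortExact.moduleCat_exact_iff_function_exact _).1 hex
  let ι : ModuleCat.of R (LinearMap.ker f) ⟶ ModuleCat.of R P :=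
    ModuleCat.ofHom (LinearMap.ker f).subtype
  have hw' : S.complex.d 1 0 ≫ (ε ≫ ι) = 0 := by
    rw [← Category.assoc, hw, Limits.zero_comp]
  have w : (ChainComplex.augment S.complex (ε ≫ ι) hw').d 1 0 ≫ ModuleCat.ofHom f = 0 := by
    ext x
    exact (ε.hom x).2
  have hproj : ∀ n, Projective ((ChainComplex.augment S.complex (ε ≫ ι) hw').X n) := by
    rintro (_ | n)
    · exact (IsProjective.iff_projective P).1 hP
    · exact S.projective n
  have hexact : ∀ n, (ChainComplex.augment S.complex (ε ≫ ι) hw').ExactAt (n + 1) := by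
    intro n
    rw [HomologicalComplex.exactAt_iff' _ (n + 2) (n + 1) n (by simp) (by simp)]
    rw [ShortComplex.ShortExact.moduleCat_exact_iff_function_exact]
    cases n with
    | zero =>
      intro x
      refine Iff.trans ?_ (hex' x)
      exact (Subtype.ext_iff (a1 := ε.hom x) (a2 := 0)).symm
    | succ n =>
      exact (ShortComplex.ShortExact.moduleCat_exact_iff_function_exact _).1 (S.exact_succ n)
  have hexact₀ : (ShortComplex.mk _ _ w).Exact := by
    rw [ShortComplex.ShortExact.moduleCat_exact_iff_function_exact]
    intro x
    constructor
    · intro hx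
      obtain ⟨y, hy⟩ := hεs ⟨x, hx⟩
      exact ⟨y, congrArg Subtype.val hy⟩
    · rintro ⟨y, rfl⟩
      exact (ε.hom y).2
  obtain ⟨T, hT⟩ := exists_projectiveResolution (ModuleCat.of R M) _ hproj hexact
    (ModuleCat.ofHom f) w hexact₀ ((ModuleCat.epi_iff_surjective _).2 hf)
  refine ⟨T, ?_, fun n => ?_⟩ <;> rw [hT] <;> rfl

theorem FPn.isFP (m : ℕ) : ∀ (M : Type) [AddCommGroup M] [Module R M], FPn R m M →
    ModuleCat.IsFP R m (ModuleCat.of R M) := by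
  induction m with
  | zero =>
    intro M _ _ h
    have : Module.Finite R M := h
    obtain ⟨k, f, hf⟩ := Module.Finite.exists_fin' R M
    obtain ⟨T, hT, -⟩ := exists_splice f inferInstance hf (ProjectiveResolution.of _)
    refine ⟨T, fun i hi => ?_⟩
    obtain rfl : i = 0 := by omega
    rw [hT]
    exact inferInstanceAs (Module.Finite R (Fin k → R))
  | succ m ih =>
    intro M _ _ h
    obtain ⟨P, _, _, f, hfin, hproj, hf, hk⟩ := h
    obtain ⟨S, hS⟩ := ih _ hk
    obtain ⟨T, hT0, hT⟩ := exists_splice f hproj hf S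
    refine ⟨T, fun i hi => ?_⟩
    cases i with
    | zero => rw [hT0]; exact hfin
    | succ i => rw [hT]; exact hS i (by push_cast at hi; omega)

end FPn

/-- Lemma 2: if `⋯ → Q i → Q (i-1) → ⋯ → Q 0 → V → 0` is an exact complex of `R`-modules
with `Q i` of type `FP (m - i)` for all `0 ≤ i ≤ m`, then `V` is of type `FP m`.
Here `d i : Q (i+1) → Q i` and `ε : Q 0 → V`. -/
theorem fp_of_exact_complex (R : Type) [Ring R] (m : ℕ)
    (Q : ℕ → Type) [∀ i, AddCommGroup (Q i)] [∀ i, Module R (Q i)]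
    (V : Type) [AddCommGroup V] [Module R V]
    (d : ∀ i : ℕ, Q (i + 1) →ₗ[R] Q i) (ε : Q 0 →ₗ[R] V)
    (hsurj : Function.Surjective ε)
    (hex0 : Function.Exact (d 0) ε)
    (hex : ∀ i : ℕ, Function.Exact (d (i + 1)) (d i))
    (hQ : ∀ i : ℕ, i ≤ m → ModuleCat.IsFP R ((m : ℤ) - i) (ModuleCat.of R (Q i))) :
    ModuleCat.IsFP R m (ModuleCat.of R V) := by
  exact FPn.isFP m V <| FPn.of_complex m Q V d ε hsurj hex0 hex fun i hi =>
    FPn.of_isFP (m - i) (Q i) (by rw [Nat.cast_sub hi]; exact hQ i hi)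
end

section
/- Let S be a subring of a ring R such that R is flat as a right S-module and the inclusion S → R splits as a map of right S-modules. Then a left S-module M is of type FP_m as an S-module if and only if R ⊗_S M is of type FP_m as an R-module. -/
/-!
Finiteness type is a condition on iterated syzygies: `M` is of type `FP m` exactly when it has
`m + 1` successive covers by finitely generated projectives (`BaseChangeFP.FPn`,
`BaseChangeFP.isFP_iff_fpn`), and by Schanuel's lemma the covers may be chosen freely
(`BaseChangeFP.FPn.schanuel`).

Since `R` is right flat over `S`, base change is exact; it preserves projectives and finite
generation, so it carries syzygies to syzygies.  This gives the forward implication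
(`BaseChangeFP.FPn.baseChange`).  For the converse (`BaseChangeFP.FPn.of_baseChange`), the
splitting `π` of `S → R` shows that `M` is finitely generated as soon as `R ⊗_S M` is
(`BaseChangeFP.finite_of_baseChange`).  If `K` is the kernel of a map from a finite free module
onto `M`, then `R ⊗_S K` is a syzygy of `R ⊗_S M`, hence of type `FP (m - 1)` by Schanuel, and
induction applies to `K`.

The rings are noncommutative, so tensor products are handled through their universal property:
existence is shown in `BaseChangeFP.exists_baseChange` and right exactness in
`BaseChangeFP.right_exact`.
-/

open CategoryTheory

/-- `φ : M →+ N` presents the left `R`-module `N` as the base change `R ⊗_S M` of the left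
`S`-module `M` along the ring homomorphism `ι : S →+* R`: `φ` is `ι`-semilinear and has the
universal property of extension of scalars. -/
structure IsBaseChangeAlong (S R : Type) [Ring S] [Ring R] (ι : S →+* R)
    (M : Type) [AddCommGroup M] [Module S M]
    (N : Type) [AddCommGroup N] [Module R N] (φ : M →+ N) : Prop where
  semilinear : ∀ (s : S) (m : M), φ (s • m) = ι s • φ m
  universal : ∀ (P : Type) [AddCommGroup P] [Module R P] (ψ : M →+ P),
      (∀ (s : S) (m : M), ψ (s • m) = ι s • ψ m) →
      ∃! ψ' : N →ₗ[R] P, ∀ m : M, ψ' (φ m) = ψ m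

/-- `R` is flat as a right `S`-module (via `ι : S →+* R`): the base-change functor
`R ⊗_S —` preserves injectivity of maps of left `S`-modules. -/
def RightFlatAlong (S R : Type) [Ring S] [Ring R] (ι : S →+* R) : Prop :=
  ∀ (M₁ M₂ : Type) [AddCommGroup M₁] [Module S M₁] [AddCommGroup M₂] [Module S M₂]
    (f : M₁ →ₗ[S] M₂), Function.Injective f →
    ∀ (N₁ N₂ : Type) [AddCommGroup N₁] [Module R N₁] [AddCommGroup N₂] [Module R N₂]
      (φ₁ : M₁ →+ N₁) (φ₂ : M₂ →+ N₂),
      IsBaseChangeAlong S R ι M₁ N₁ φ₁ → IsBaseChangeAlong S R ι M₂ N₂ φ₂ →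
      ∀ F : N₁ →ₗ[R] N₂, (∀ m : M₁, F (φ₁ m) = φ₂ (f m)) → Function.Injective F

/-- The inclusion `ι : S → R` splits as a map of right `S`-modules. -/
def SplitsAsRightSModule (S R : Type) [Ring S] [Ring R] (ι : S →+* R) : Prop :=
  ∃ π : R →+ S, (∀ (r : R) (s : S), π (r * ι s) = π r * s) ∧ ∀ s : S, π (ι s) = s

namespace BaseChangeFP

open Function

/-! ### Partial finite resolutions and Schanuel's lemma -/

section FPn

variable (R : Type) [Ring R]

/-- `FPn R k M` says that `M` has a partial projective resolution by `k` finitely generated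
projective modules (in degrees `0, …, k - 1`); for `k = 0` there is no condition.  Thus `FPn R k`
is type `FP (k - 1)`.  The first syzygy is an arbitrary module `K` with an injection into `P`
rather than a submodule of `P`, so that invariance under isomorphism is built in. -/
def FPn : ℕ → ∀ (M : Type) [AddCommGroup M] [Module R M], Prop
  | 0, _, _, _ => True
  | k + 1, M, _, _ => ∃ (P K : Type) (_ : AddCommGroup P) (_ : Module R P)
      (_ : AddCommGroup K) (_ : Module R K) (i : K →ₗ[R] P) (f : P →ₗ[R] M),
      Module.Projective R P ∧ Module.Finite R P ∧ Injective i ∧ Exact i f ∧ Surjective f ∧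
      FPn k K

variable {R}
variable {K L P K' P' M : Type} [AddCommGroup K] [Module R K] [AddCommGroup L] [Module R L]
  [AddCommGroup P] [Module R P] [AddCommGroup K'] [Module R K'] [AddCommGroup P'] [Module R P']
  [AddCommGroup M] [Module R M]

lemma FPn.finite {k : ℕ} (h : FPn R (k + 1) M) : Module.Finite R M := by
  obtain ⟨P, K, _, _, _, _, i, f, _, _, _, _, hf, _⟩ := h
  exact Module.Finite.of_surjective f hf

/-- An extension of a finitely generated projective module `P` by a module of type `FPn k` is
of type `FPn k`: if `Q` covers `K`, then `Q × P` covers `L` with the same syzygy. -/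
lemma FPn.extension {k : ℕ} (i : K →ₗ[R] L) (p : L →ₗ[R] P) (hi : Injective i) (hip : Exact i p)
    (hp : Surjective p) [Module.Projective R P] [Module.Finite R P] (h : FPn R k K) :
    FPn R k L := by
  cases k with
  | zero => trivial
  | succ k =>
    obtain ⟨Q, K₁, _, _, _, _, j, f, _, _, hj, hjf, hf, hK⟩ := h
    obtain ⟨σ, hσ⟩ := Module.projective_lifting_property p LinearMap.id hp
    have hσ' : ∀ x, p (σ x) = x := fun x => LinearMap.congr_fun hσ x
    have hpi : ∀ x, p (i x) = 0 := fun x => hip.apply_apply_eq_zero x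
    refine ⟨Q × P, K₁, inferInstance, inferInstance, inferInstance, inferInstance,
      (LinearMap.inl R Q P).comp j, (i.comp f).coprod σ, inferInstance, inferInstance,
      ?_, ?_, ?_, hK⟩
    · exact LinearMap.inl_injective.comp hj
    · rintro ⟨q, x⟩
      constructor
      · intro hx
        simp only [LinearMap.coprod_apply, LinearMap.comp_apply] at hx
        have hx0 : x = 0 := by simpa [hpi, hσ'] using congrArg p hx
        subst hx0
        have : f q = 0 := hi (by simpa using hx)
        obtain ⟨y, rfl⟩ := (hjf q).1 this
        exact ⟨y, rfl⟩
      · rintro ⟨y, hy⟩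
        obtain ⟨rfl, rfl⟩ := Prod.ext_iff.1 hy
        simp [hjf.apply_apply_eq_zero]
    · intro l
      obtain ⟨y, hy⟩ := (hip (l - σ (p l))).1 (by simp [hσ'])
      obtain ⟨q, rfl⟩ := hf y
      exact ⟨(q, p l), by simp [hy]⟩

/-- The kernel of a surjection from a module of type `FPn k` onto a projective
module `P` is of type `FPn k`: if `Q` covers `L`, then the preimage of `K` in `Q` is
the kernel of a split surjection `Q → P`, and it covers `K` with the same syzygy. -/
lemma FPn.kernel {k : ℕ} (i : K →ₗ[R] L) (p : L →ₗ[R] P) (hi : Injective i) (hip : Exact i p)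
    (hp : Surjective p) [Module.Projective R P] (h : FPn R k L) :
    FPn R k K := by
  cases k with
  | zero => trivial
  | succ k =>
    obtain ⟨Q, L₁, _, _, _, _, j, f, _, _, hj, hjf, hf, hL⟩ := h
    obtain ⟨τ, hτ⟩ := Module.projective_lifting_property (p.comp f) LinearMap.id (hp.comp hf)
    have hτ' : ∀ x, p (f (τ x)) = x := fun x => LinearMap.congr_fun hτ x
    let W := LinearMap.ker (p.comp f)
    let ρ : Q →ₗ[R] W := LinearMap.codRestrict W (LinearMap.id - τ.comp (p.comp f))
      (fun q => by simp [W, hτ'])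
    have hρ : ρ.comp W.subtype = LinearMap.id := by
      ext w
      have : p (f w) = 0 := w.2
      simp [ρ, this]
    have hρs : Surjective ρ := fun w => ⟨w, LinearMap.congr_fun hρ w⟩
    have hW : Module.Projective R W := Module.Projective.of_split W.subtype ρ hρ
    have hWf : Module.Finite R W := Module.Finite.of_surjective ρ hρs
    let g : W →ₗ[R] K := (LinearEquiv.ofInjective i hi).symm.toLinearMap.comp
      (LinearMap.codRestrict (LinearMap.range i) (f.comp W.subtype)
        (fun w => (hip _).1 w.2))
    have hg : ∀ w : W, i (g w) = f w := fun w =>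
      congrArg Subtype.val (LinearEquiv.apply_symm_apply (LinearEquiv.ofInjective i hi) _)
    refine ⟨W, L₁, inferInstance, inferInstance, inferInstance, inferInstance,
      LinearMap.codRestrict W j (fun x => by simp [W, hjf.apply_apply_eq_zero]), g, hW, hWf,
      ?_, ?_, ?_, hL⟩
    · intro x y hxy
      exact hj (congrArg Subtype.val hxy)
    · intro w
      constructor
      · intro hw
        obtain ⟨y, hy⟩ := (hjf (w : Q)).1 (by rw [← hg, hw, map_zero])
        exact ⟨y, Subtype.ext hy⟩
      · rintro ⟨y, rfl⟩
        apply hi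
        exact (hg _).trans ((hjf.apply_apply_eq_zero y).trans (map_zero i).symm)
    · intro x
      obtain ⟨q, hq⟩ := hf (i x)
      refine ⟨⟨q, ?_⟩, hi ?_⟩
      · simp [W, hq, hip.apply_apply_eq_zero]
      · rw [hg, hq]

/-- Schanuel's lemma: two syzygies `K`, `K'` of the same module are both kernels of surjections
from the fibre product `P ×_M P'`, onto `P'` and onto `P` respectively, so `FPn.extension` passes from
`K` to the fibre product and `FPn.kernel` from there to `K'`. -/
lemma FPn.schanuel {k : ℕ} (i : K →ₗ[R] P) (f : P →ₗ[R] M) (hi : Injective i) (hif : Exact i f)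
    (hf : Surjective f) [Module.Projective R P]
    (i' : K' →ₗ[R] P') (f' : P' →ₗ[R] M) (hi' : Injective i') (hif' : Exact i' f')
    (hf' : Surjective f') [Module.Projective R P'] [Module.Finite R P'] (h : FPn R k K) :
    FPn R k K' := by
  let E := LinearMap.ker (f.comp (LinearMap.fst R P P') - f'.comp (LinearMap.snd R P P'))
  have hE : ∀ e : P × P', e ∈ E ↔ f e.1 = f' e.2 := fun e => by simp [E, sub_eq_zero]
  have hEK : FPn R k E := by
    refine FPn.extension
      (LinearMap.codRestrict E ((LinearMap.inl R P P').comp i)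
        (fun x => by simp [hE, hif.apply_apply_eq_zero]))
      ((LinearMap.snd R P P').comp E.subtype) ?_ ?_ ?_ h
    · intro x y hxy
      exact hi (congrArg (fun e : E => e.1.1) hxy)
    · rintro ⟨⟨a, b⟩, he⟩
      rw [hE] at he
      constructor
      · intro hb
        obtain rfl : b = 0 := hb
        obtain ⟨y, rfl⟩ := (hif a).1 (by simpa using he)
        exact ⟨y, rfl⟩
      · rintro ⟨y, hy⟩
        exact (congrArg (fun e : E => e.1.2) hy).symm
    · intro b
      obtain ⟨a, ha⟩ := hf (f' b)
      exact ⟨⟨(a, b), (hE _).2 ha⟩, rfl⟩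
  refine FPn.kernel
    (LinearMap.codRestrict E ((LinearMap.inr R P P').comp i')
      (fun x => by simp [hE, hif'.apply_apply_eq_zero]))
    ((LinearMap.fst R P P').comp E.subtype) ?_ ?_ ?_ hEK
  · intro x y hxy
    exact hi' (congrArg (fun e : E => e.1.2) hxy)
  · rintro ⟨⟨a, b⟩, he⟩
    rw [hE] at he
    constructor
    · intro ha
      obtain rfl : a = 0 := ha
      obtain ⟨y, rfl⟩ := (hif' b).1 (by simpa using he.symm)
      exact ⟨y, rfl⟩
    · rintro ⟨y, hy⟩
      exact (congrArg (fun e : E => e.1.1) hy).symm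
  · intro a
    obtain ⟨b, hb⟩ := hf' (f a)
    exact ⟨⟨(a, b), (hE _).2 hb.symm⟩, rfl⟩

end FPn

/-! ### Base change along a ring homomorphism -/

section BaseChange

variable {S R : Type} [Ring S] [Ring R] {ι : S →+* R}
variable {M : Type} [AddCommGroup M] [Module S M] {N : Type} [AddCommGroup N] [Module R N]
  {φ : M →+ N}

lemma hom_ext (h : IsBaseChangeAlong S R ι M N φ) {P : Type} [AddCommGroup P] [Module R P]
    {f g : N →ₗ[R] P} (hfg : ∀ m, f (φ m) = g (φ m)) : f = g := by
  obtain ⟨_, _, hu⟩ := h.universal P (g.toAddMonoidHom.comp φ)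
    (fun s m => by simp [h.semilinear])
  rw [hu f hfg, hu g (fun _ => rfl)]

lemma span_range (h : IsBaseChangeAlong S R ι M N φ) :
    Submodule.span R (Set.range φ) = ⊤ := by
  have : (Submodule.span R (Set.range φ)).mkQ = 0 := hom_ext h fun m => by
    simpa using Submodule.subset_span (s := Set.range φ) ⟨m, rfl⟩
  rw [← Submodule.ker_mkQ (Submodule.span R (Set.range φ)), this, LinearMap.ker_zero]

lemma exists_map (h : IsBaseChangeAlong S R ι M N φ)
    {M' : Type} [AddCommGroup M'] [Module S M'] {N' : Type} [AddCommGroup N'] [Module R N']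
    {φ' : M' →+ N'} (h' : IsBaseChangeAlong S R ι M' N' φ') (f : M →ₗ[S] M') :
    ∃ F : N →ₗ[R] N', ∀ m, F (φ m) = φ' (f m) :=
  (h.universal N' (φ'.comp f.toAddMonoidHom) (fun s m => by simp [h'.semilinear])).exists

/-- Base change along `ι` exists: it is the free `R`-module on `M` modulo additivity and
`S`-semilinearity of the tautological map. -/
lemma exists_baseChange (ι : S →+* R) (M : Type) [AddCommGroup M] [Module S M] :
    ∃ (N : Type) (_ : AddCommGroup N) (_ : Module R N) (φ : M →+ N),
      IsBaseChangeAlong S R ι M N φ := by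
  let rel : Set (M →₀ R) :=
    {x | (∃ a b : M, x = Finsupp.single (a + b) 1 - (Finsupp.single a 1 + Finsupp.single b 1)) ∨
      ∃ (s : S) (a : M), x = Finsupp.single (s • a) 1 - ι s • Finsupp.single a 1}
  let T := Submodule.span R rel
  have hadd : ∀ a b : M, T.mkQ (Finsupp.single (a + b) 1) =
      T.mkQ (Finsupp.single a 1) + T.mkQ (Finsupp.single b 1) := fun a b => by
    rw [← map_add, ← sub_eq_zero, ← map_sub]
    exact (Submodule.Quotient.mk_eq_zero T).2 (Submodule.subset_span (Or.inl ⟨a, b, rfl⟩))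
  have hsmul : ∀ (s : S) (a : M), T.mkQ (Finsupp.single (s • a) 1) =
      ι s • T.mkQ (Finsupp.single a 1) := fun s a => by
    rw [← map_smul, ← sub_eq_zero, ← map_sub]
    exact (Submodule.Quotient.mk_eq_zero T).2 (Submodule.subset_span (Or.inr ⟨s, a, rfl⟩))
  refine ⟨(M →₀ R) ⧸ T, inferInstance, inferInstance,
    AddMonoidHom.mk' (fun m => T.mkQ (Finsupp.single m 1)) hadd, hsmul, ?_⟩
  intro P _ _ ψ hψ
  refine ⟨T.liftQ (Finsupp.linearCombination R ψ) ?_, ?_, ?_⟩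
  · refine Submodule.span_le.2 ?_
    rintro x (⟨a, b, rfl⟩ | ⟨s, a, rfl⟩)
    · simp
    · simp [hψ]
  · intro m
    simp
  · intro g hg
    refine Submodule.linearMap_qext _ (Finsupp.lhom_ext' fun m => LinearMap.ext_ring ?_)
    simpa using hg m

/-- Base change is right exact; this uses only the universal property. -/
lemma right_exact {M₁ M₂ M₃ N₁ N₂ N₃ : Type} [AddCommGroup M₁] [Module S M₁]
    [AddCommGroup M₂] [Module S M₂] [AddCommGroup M₃] [Module S M₃]
    [AddCommGroup N₁] [Module R N₁] [AddCommGroup N₂] [Module R N₂]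
    [AddCommGroup N₃] [Module R N₃]
    {φ₁ : M₁ →+ N₁} {φ₂ : M₂ →+ N₂} {φ₃ : M₃ →+ N₃}
    (h₁ : IsBaseChangeAlong S R ι M₁ N₁ φ₁) (h₂ : IsBaseChangeAlong S R ι M₂ N₂ φ₂)
    (h₃ : IsBaseChangeAlong S R ι M₃ N₃ φ₃)
    {i : M₁ →ₗ[S] M₂} {f : M₂ →ₗ[S] M₃} (hif : Exact i f) (hf : Surjective f)
    {I : N₁ →ₗ[R] N₂} {F : N₂ →ₗ[R] N₃} (hI : ∀ m, I (φ₁ m) = φ₂ (i m))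
    (hF : ∀ m, F (φ₂ m) = φ₃ (f m)) : Exact I F ∧ Surjective F := by
  have hFI : F.comp I = 0 := hom_ext h₁ fun m => by
    simp [hI, hF, hif.apply_apply_eq_zero]
  constructor
  · -- The map `M₃ → N₂ / range I` sending `m` to the class of any lift of `m` to `M₂`
    -- induces `G : N₃ → N₂ / range I` with `G ∘ F` the quotient map.
    let C := LinearMap.range I
    have hwd : ∀ x y : M₂, f x = f y → C.mkQ (φ₂ x) = C.mkQ (φ₂ y) := by
      intro x y hxy
      obtain ⟨z, hz⟩ := (hif (x - y)).1 (by simp [hxy])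
      rw [← sub_eq_zero, ← map_sub, ← map_sub, ← hz, ← hI]
      exact (Submodule.Quotient.mk_eq_zero C).2 ⟨_, rfl⟩
    have hs : ∀ m, f (surjInv hf m) = m := surjInv_eq hf
    let ψ : M₃ →+ N₂ ⧸ C := AddMonoidHom.mk' (fun m => C.mkQ (φ₂ (surjInv hf m))) fun a b => by
      rw [← map_add, ← map_add]
      exact hwd _ _ (by simp [hs])
    obtain ⟨G, hG, -⟩ := h₃.universal (N₂ ⧸ C) ψ fun s m => by
      change C.mkQ _ = ι s • C.mkQ _
      rw [← map_smul, ← h₂.semilinear]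
      exact hwd _ _ (by simp [hs])
    have hGF : G.comp F = C.mkQ := hom_ext h₂ fun m => by
      rw [LinearMap.comp_apply, hF, hG]
      exact hwd _ _ (hs _)
    intro x
    constructor
    · intro hx
      have : C.mkQ x = 0 := by rw [← hGF, LinearMap.comp_apply, hx, map_zero]
      exact (Submodule.Quotient.mk_eq_zero C).1 this
    · rintro ⟨y, rfl⟩
      exact LinearMap.congr_fun hFI y
  · rw [← LinearMap.range_eq_top, eq_top_iff, ← span_range h₃, Submodule.span_le]
    rintro _ ⟨m, rfl⟩
    obtain ⟨x, rfl⟩ := hf m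
    exact ⟨φ₂ x, hF x⟩

lemma finite_baseChange (h : IsBaseChangeAlong S R ι M N φ) [hM : Module.Finite S M] :
    Module.Finite R N := by
  obtain ⟨t, ht⟩ := hM.fg_top
  classical
  refine ⟨⟨t.image φ, ?_⟩⟩
  rw [eq_top_iff, ← span_range h, Submodule.span_le]
  rintro _ ⟨m, rfl⟩
  have hm : m ∈ Submodule.span S (t : Set M) := ht ▸ Submodule.mem_top
  induction hm using Submodule.span_induction with
  | mem x hx => exact Submodule.subset_span (by simpa using ⟨x, hx, rfl⟩)
  | zero => simp
  | add x y _ _ hx hy => simpa using add_mem hx hy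
  | smul s x _ hx =>
    rw [h.semilinear]
    exact Submodule.smul_mem _ _ hx

/-- Base change is left adjoint to restriction of scalars, which preserves surjections. -/
lemma projective_baseChange (h : IsBaseChangeAlong S R ι M N φ) [Module.Projective S M] :
    Module.Projective R N := by
  refine Module.Projective.of_lifting_property'' fun f hf => ?_
  let : Module S (N →₀ R) := Module.compHom _ ι
  let : Module S N := Module.compHom _ ι
  let f' : (N →₀ R) →ₗ[S] N :=
    { toFun := f, map_add' := map_add f, map_smul' := fun s x => map_smul f (ι s) x }
  let φ' : M →ₗ[S] N := { toFun := φ, map_add' := map_add φ, map_smul' := h.semilinear }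
  obtain ⟨g, hg⟩ := Module.projective_lifting_property f' φ' hf
  obtain ⟨G, hG, -⟩ := h.universal (N →₀ R) g.toAddMonoidHom fun s m => map_smul g s m
  refine ⟨G, hom_ext h fun m => ?_⟩
  rw [LinearMap.comp_apply, hG]
  exact LinearMap.congr_fun hg m

/-- The coinduced module of additive maps `R → M`, a type synonym so that it can carry the left
`R`-action `(r • f) x = f (x * r)`. -/
def Coind (R M : Type) [Ring R] [AddCommGroup M] : Type := R →+ M

instance (R M : Type) [Ring R] [AddCommGroup M] : AddCommGroup (Coind R M) :=
  inferInstanceAs (AddCommGroup (R →+ M))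

instance (R M : Type) [Ring R] [AddCommGroup M] : Module R (Coind R M) where
  smul r f := AddMonoidHom.comp (M := R) (N := R) (P := M) f (AddMonoidHom.mulRight r)
  one_smul f := AddMonoidHom.ext fun x => congrArg (DFunLike.coe (F := R →+ M) f) (mul_one x)
  mul_smul r s f := AddMonoidHom.ext fun x =>
    congrArg (DFunLike.coe (F := R →+ M) f) (mul_assoc x r s).symm
  smul_zero _ := rfl
  smul_add _ _ _ := rfl
  add_smul r s f := AddMonoidHom.ext fun x =>
    (congrArg (DFunLike.coe (F := R →+ M) f) (mul_add x r s)).trans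
      (AddMonoidHom.map_add (M := R) (N := M) f _ _)
  zero_smul f := AddMonoidHom.ext fun x =>
    (congrArg (DFunLike.coe (F := R →+ M) f) (mul_zero x)).trans
      (AddMonoidHom.map_zero (M := R) (N := M) f)

/-- If the inclusion splits, a module with finitely generated base change is finitely generated.
Some finite `t ⊆ M` has `φ '' t` generating `N`.  With `Q = M / span t`, the splitting `π` gives
an `S`-semilinear map `M → (R →+ Q)`, `m ↦ (r ↦ π r • m)`; the induced map on `N` kills `φ '' t`,
hence is zero, and evaluation at `r = 1` shows `Q = 0`. -/
lemma finite_of_baseChange (hsplit : SplitsAsRightSModule S R ι)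
    (h : IsBaseChangeAlong S R ι M N φ) [hN : Module.Finite R N] : Module.Finite S M := by
  obtain ⟨π, hπ, hπ1⟩ := hsplit
  have hfg : (Submodule.span R (Set.range φ)).FG := by
    rw [span_range h]
    exact hN.fg_top
  obtain ⟨t', ht', hspan⟩ := Submodule.fg_span_iff_fg_span_finset_subset _ |>.1 hfg
  rw [span_range h] at hspan
  rw [← Set.image_univ] at ht'
  classical
  obtain ⟨t, -, rfl⟩ := Finset.subset_set_image_iff.1 ht'
  let T := Submodule.span S (t : Set M)
  let ψ₀ : M →+ R →+ M ⧸ T :=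
    AddMonoidHom.mk' (fun m => AddMonoidHom.mk' (fun r => π r • T.mkQ m)
      (fun a b => by rw [map_add, add_smul]))
      (fun a b => AddMonoidHom.ext fun r => by simp)
  let ψ : M →+ Coind R (M ⧸ T) := ψ₀
  obtain ⟨Ψ, hΨ, -⟩ := h.universal (Coind R (M ⧸ T)) ψ fun s m =>
    AddMonoidHom.ext (M := R) (N := M ⧸ T) fun x => by
      change π x • T.mkQ (s • m) = π (x * ι s) • T.mkQ m
      rw [hπ, map_smul, mul_smul]
  have hΨ0 : Ψ = 0 := by
    rw [← LinearMap.ker_eq_top, eq_top_iff, hspan, Submodule.span_le]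
    intro x hx
    obtain ⟨m, hm, rfl⟩ := by simpa using hx
    have hm0 : T.mkQ m = 0 := (Submodule.Quotient.mk_eq_zero T).2 (Submodule.subset_span hm)
    change Ψ (φ m) = 0
    rw [hΨ]
    refine AddMonoidHom.ext (M := R) (N := M ⧸ T) fun r => ?_
    change π r • T.mkQ m = 0
    rw [hm0, smul_zero]
  refine ⟨⟨t, eq_top_iff.2 fun m _ => (Submodule.Quotient.mk_eq_zero T).1 ?_⟩⟩
  have hm : ψ m = 0 := by rw [← hΨ, hΨ0, LinearMap.zero_apply]
  have h1 : π 1 • T.mkQ m = 0 := DFunLike.congr_fun (F := R →+ M ⧸ T) hm 1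
  rwa [← map_one ι, hπ1, one_smul] at h1

/-- By flatness, base change carries a cover of `M` with syzygy `K` to a cover of the base change
of `M` whose syzygy is the base change of `K`. -/
lemma FPn.baseChange (hflat : RightFlatAlong S R ι) (k : ℕ) :
    ∀ (M : Type) [AddCommGroup M] [Module S M] (N : Type) [AddCommGroup N] [Module R N]
      (φ : M →+ N), IsBaseChangeAlong S R ι M N φ → FPn S k M → FPn R k N := by
  induction k with
  | zero => intros; trivial
  | succ k ih =>
    rintro M _ _ N _ _ φ h ⟨P, K, _, _, _, _, i, f, _, _, hi, hif, hf, hK⟩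
    obtain ⟨TP, _, _, φP, hP⟩ := exists_baseChange ι P
    obtain ⟨TK, _, _, φK, hTK⟩ := exists_baseChange ι K
    obtain ⟨I, hI⟩ := exists_map hTK hP i
    obtain ⟨F, hF⟩ := exists_map hP h f
    obtain ⟨hIF, hFs⟩ := right_exact hTK hP h hif hf hI hF
    exact ⟨TP, TK, _, _, _, _, I, F, projective_baseChange hP, finite_baseChange hP,
      hflat K P i hi TK TP φK φP hTK hP I hI, hIF, hFs, ih K TK φK hTK hK⟩

/-- Descent: `M` is finitely generated, hence covered by a finite free module with syzygy `K`;
by flatness `R ⊗ K` is a syzygy of `R ⊗ M = N`, so Schanuel's lemma and induction apply to `K`. -/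
lemma FPn.of_baseChange (hflat : RightFlatAlong S R ι) (hsplit : SplitsAsRightSModule S R ι)
    (k : ℕ) :
    ∀ (M : Type) [AddCommGroup M] [Module S M] (N : Type) [AddCommGroup N] [Module R N]
      (φ : M →+ N), IsBaseChangeAlong S R ι M N φ → FPn R k N → FPn S k M := by
  induction k with
  | zero => intros; trivial
  | succ k ih =>
    intro M _ _ N _ _ φ h hN
    have := hN.finite
    have := finite_of_baseChange hsplit h
    obtain ⟨n, f, hf⟩ := Module.Finite.exists_fin' S M
    let K := LinearMap.ker f
    have hKf : Exact K.subtype f := LinearMap.exact_subtype_ker_map f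
    obtain ⟨TP, _, _, φP, hP⟩ := exists_baseChange ι (Fin n → S)
    obtain ⟨TK, _, _, φK, hTK⟩ := exists_baseChange ι K
    obtain ⟨I, hI⟩ := exists_map hTK hP K.subtype
    obtain ⟨F, hF⟩ := exists_map hP h f
    obtain ⟨hIF, hFs⟩ := right_exact hTK hP h hKf hf hI hF
    have := projective_baseChange hP
    have := finite_baseChange hP
    have hI' := hflat K (Fin n → S) K.subtype K.injective_subtype TK TP φK φP hTK hP I hI
    obtain ⟨Q, L, _, _, _, _, j, g, _, _, hj, hjg, hg, hL⟩ := hN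
    exact ⟨Fin n → S, K, _, _, _, _, K.subtype, f, inferInstance, inferInstance,
      K.injective_subtype, hKf, hf,
      ih K TK φK hTK (FPn.schanuel j g hj hjg hg I F hI' hIF hFs hL)⟩

end BaseChange

/-! ### Comparison with projective resolutions -/

section Resolution

variable {R : Type} [Ring R]

/-- The boundaries `range d` in degree `j` of a complex of projectives, exact in positive
degrees, whose terms in degrees `j + 1, …, j + k` are finitely generated: the terms in degrees
`> j` resolve them. -/
lemma FPn.range_d (C : ChainComplex (ModuleCat R) ℕ)
    (hC : ∀ n, Module.Projective R (C.X n))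
    (hex : ∀ n, Exact (C.d (n + 2) (n + 1)) (C.d (n + 1) n)) (k : ℕ) :
    ∀ j, (∀ n, j < n → n ≤ j + k → Module.Finite R (C.X n)) →
      FPn R k (LinearMap.range (C.d (j + 1) j).hom) := by
  induction k with
  | zero => intros; trivial
  | succ k ih =>
    intro j hj
    refine ⟨C.X (j + 1), LinearMap.range (C.d (j + 2) (j + 1)).hom, inferInstance, inferInstance,
      inferInstance, inferInstance, Submodule.subtype _, (C.d (j + 1) j).hom.rangeRestrict,
      hC _, hj _ (by omega) (by omega), Submodule.injective_subtype _, ?_,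
      LinearMap.surjective_rangeRestrict _,
      ih (j + 1) fun n h₁ h₂ => hj n (by omega) (by omega)⟩
    intro x
    rw [← Submodule.coe_eq_zero]
    simpa using hex j x

lemma FPn.of_isFP {M : ModuleCat R} {m : ℤ} (h : ModuleCat.IsFP R m M) :
    FPn R (m + 1).toNat M := by
  obtain ⟨P, hP⟩ := h
  have hproj : ∀ n, Module.Projective R (P.complex.X n) := fun n =>
    (IsProjective.iff_projective _).2 (P.projective n)
  have hex : ∀ n, Exact (P.complex.d (n + 2) (n + 1)) (P.complex.d (n + 1) n) := fun n =>
    LinearMap.exact_iff.2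
      ((ShortComplex.moduleCat_exact_iff_range_eq_ker _).1 (P.exact_succ n)).symm
  have hsurj : Surjective (P.π.f 0) := (ModuleCat.epi_iff_surjective _).1 inferInstance
  have hex0 : Exact (P.complex.d 1 0) (P.π.f 0) := by
    have := ShortComplex.exact_of_g_is_cokernel
      (ShortComplex.mk _ _ P.complex_d_comp_π_f_zero) P.isColimitCokernelCofork
    exact LinearMap.exact_iff.2 ((ShortComplex.moduleCat_exact_iff_range_eq_ker _).1 this).symm
  rcases hk : (m + 1).toNat with _ | k
  · trivial
  · refine ⟨P.complex.X 0, LinearMap.range (P.complex.d 1 0).hom, inferInstance, inferInstance,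
      inferInstance, inferInstance, Submodule.subtype _, (P.π.f 0).hom,
      hproj 0, hP 0 (by omega), Submodule.injective_subtype _, ?_, hsurj,
      FPn.range_d P.complex hproj hex k 0 fun n h₁ h₂ => hP n (by omega)⟩
    intro x
    rw [Submodule.coe_subtype, Subtype.range_coe]
    exact hex0 x

/-- One step of a resolution: every module of type `FPn k` is covered by a projective module
with kernel of type `FPn (k - 1)`, and the cover is finitely generated when `0 < k`.  The
subtraction truncates: for `k = 0` the kernel is again only required to be of type `FPn 0`. -/
lemma FPn.exists_cover {k : ℕ} (M : ModuleCat R) (h : FPn R k M) :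
    ∃ (P K : ModuleCat R) (i : K ⟶ P) (f : P ⟶ M), Module.Projective R P ∧
      (0 < k → Module.Finite R P) ∧ Injective i ∧ Exact i f ∧ Surjective f ∧ FPn R (k - 1) K := by
  cases k with
  | zero =>
    let f : (M →₀ R) →ₗ[R] M := Finsupp.linearCombination R id
    exact ⟨ModuleCat.of R (M →₀ R), ModuleCat.of R (LinearMap.ker f),
      ModuleCat.ofHom (LinearMap.ker f).subtype, ModuleCat.ofHom f,
      inferInstanceAs (Module.Projective R (M →₀ R)), fun h => absurd h (lt_irrefl _),
      Submodule.injective_subtype _, LinearMap.exact_subtype_ker_map f,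
      Finsupp.linearCombination_id_surjective R M, trivial⟩
  | succ k =>
    obtain ⟨P, K, _, _, _, _, i, f, hP, hPf, hi, hif, hf, hK⟩ := h
    exact ⟨ModuleCat.of R P, ModuleCat.of R K, ModuleCat.ofHom i, ModuleCat.ofHom f,
      hP, fun _ => hPf, hi, hif, hf, hK⟩

/-- Iterating `FPn.exists_cover` gives syzygies `Z n`, covers `P n → Z n` and inclusions
`Z (n + 1) → P n`, which splice to a projective resolution of `M = Z 0`. -/
lemma FPn.isFP {M : ModuleCat R} {m : ℤ} (h : FPn R (m + 1).toNat M) :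
    ModuleCat.IsFP R m M := by
  let k := (m + 1).toNat
  choose P K i f hP hPf hi hif hf hK using
    fun (x : Σ' (k : ℕ) (M : ModuleCat R), FPn R k M) => FPn.exists_cover x.2.1 x.2.2
  let Z : ℕ → Σ' (k : ℕ) (M : ModuleCat R), FPn R k M :=
    fun n => Nat.rec ⟨k, M, h⟩ (fun _ x => ⟨x.1 - 1, K x, hK x⟩) n
  have hZ : ∀ n, (Z n).1 = k - n := by
    intro n
    induction n with
    | zero => rfl
    | succ n ih =>
      change (Z n).1 - 1 = _
      omega
  let e : ∀ n, P (Z (n + 1)) ⟶ K (Z n) := fun n => f (Z (n + 1))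
  let d : ∀ n, P (Z (n + 1)) ⟶ P (Z n) := fun n => e n ≫ i (Z n)
  have hie : ∀ n, i (Z (n + 1)) ≫ e n = 0 := fun n =>
    ModuleCat.hom_ext (LinearMap.ext (hif (Z (n + 1))).apply_apply_eq_zero)
  have hi0 : i (Z 0) ≫ f (Z 0) = 0 :=
    ModuleCat.hom_ext (LinearMap.ext (hif (Z 0)).apply_apply_eq_zero)
  have hd : ∀ n, d (n + 1) ≫ d n = 0 := fun n => by
    simp only [d, Category.assoc]
    rw [← Category.assoc (i (Z (n + 1))), hie, Limits.zero_comp, Limits.comp_zero]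
  have hd0 : d 0 ≫ f (Z 0) = 0 := by
    simp only [d, Category.assoc, hi0, Limits.comp_zero]
  have hexd : ∀ n, Exact (d (n + 1)) (d n) := by
    intro n x
    change i (Z n) (f (Z (n + 1)) x) = 0 ↔ ∃ y, i (Z (n + 1)) (f (Z (n + 2)) y) = x
    rw [map_eq_zero_iff _ (hi (Z n)), hif (Z (n + 1)) x]
    exact ((hf (Z (n + 2))).exists (p := fun y => i (Z (n + 1)) y = x))
  have hex0 : Exact (d 0) (f (Z 0)) := by
    intro x
    change f (Z 0) x = 0 ↔ ∃ y, i (Z 0) (f (Z 1) y) = x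
    rw [hif (Z 0) x]
    exact ((hf (Z 1)).exists (p := fun y => i (Z 0) y = x))
  let C : ChainComplex (ModuleCat R) ℕ := ChainComplex.of (fun n => P (Z n)) d hd
  have hCd : ∀ n, C.d (n + 1) n = d n := fun n => by simp [C]
  obtain ⟨π, hπ⟩ : ∃ π : C ⟶ (ChainComplex.single₀ (ModuleCat R)).obj M, π.f 0 = f (Z 0) :=
    ⟨(ChainComplex.toSingle₀Equiv C M).symm ⟨f (Z 0), by rw [hCd]; exact hd0⟩,
      ChainComplex.toSingle₀Equiv_symm_apply_f_zero _ _⟩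
  refine ⟨{ complex := C
            projective := fun n => (IsProjective.iff_projective _).1 (hP (Z n))
            π := π
            quasiIso := ⟨fun n => ?_⟩ }, fun n hn => hPf (Z n) ?_⟩
  · cases n with
    | zero =>
      rw [ChainComplex.quasiIsoAt₀_iff, ShortComplex.quasiIso_iff_of_zeros']
      · refine (ShortComplex.exact_and_epi_g_iff_of_iso
          (S₂ := ShortComplex.mk (d 0) (f (Z 0)) hd0) ?_).2
          ⟨(ShortComplex.moduleCat_exact_iff_range_eq_ker _).2 (LinearMap.exact_iff.1 hex0).symm,
            (ModuleCat.epi_iff_surjective _).2 (hf (Z 0))⟩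
        exact ShortComplex.isoMk (Iso.refl _) (Iso.refl _) (Iso.refl _)
          ((Category.id_comp _).trans ((hCd 0).symm.trans (Category.comp_id _).symm))
          ((Category.id_comp _).trans
            (hπ.symm.trans (Category.comp_id (π.f 0)).symm))
      all_goals rfl
    | succ n =>
      rw [quasiIsoAt_iff_exactAt' _ _ (ChainComplex.exactAt_succ_single_obj _ _),
        HomologicalComplex.exactAt_iff' _ (n + 2) (n + 1) n (by simp) (by simp),
        ShortComplex.moduleCat_exact_iff_range_eq_ker]
      have := (LinearMap.exact_iff.1 (hexd n)).symm
      rw [← hCd (n + 1), ← hCd n] at this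
      exact this
  · rw [hZ]
    omega

lemma isFP_iff_fpn (m : ℤ) (M : ModuleCat R) :
    ModuleCat.IsFP R m M ↔ FPn R (m + 1).toNat M :=
  ⟨FPn.of_isFP, FPn.isFP⟩

end Resolution

end BaseChangeFP

/-- Lemma 7: let `S` be a subring of `R` such that `R` is flat as a right `S`-module and the
inclusion `S → R` splits as a map of right `S`-modules.  Then a left `S`-module `M` is of
type `FP m` over `S` if and only if `R ⊗_S M` is of type `FP m` over `R`. -/
theorem isFP_iff_isFP_baseChange (S R : Type) [Ring S] [Ring R] (ι : S →+* R)
    (hι : Function.Injective ι)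
    (hflat : RightFlatAlong S R ι) (hsplit : SplitsAsRightSModule S R ι)
    (M : Type) [AddCommGroup M] [Module S M]
    (N : Type) [AddCommGroup N] [Module R N] (φ : M →+ N)
    (hN : IsBaseChangeAlong S R ι M N φ) (m : ℤ) :
    ModuleCat.IsFP S m (ModuleCat.of S M) ↔ ModuleCat.IsFP R m (ModuleCat.of R N) := by
  rw [BaseChangeFP.isFP_iff_fpn, BaseChangeFP.isFP_iff_fpn]
  exact ⟨BaseChangeFP.FPn.baseChange hflat _ M N φ hN,
    BaseChangeFP.FPn.of_baseChange hflat hsplit _ M N φ hN⟩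
end
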